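/- arXiv:1411.2286 — 2 statements merged into one kernel-verified Lean document; each statement's English description precedes it below -/
import Mathlib

section
/- Let d ≥ 1 and for j = 1, …, m let φ_j : ℝ^d → ℝ^{d_j} be the orthogonal projection onto a subset of d_j of the coordinates, i.e. φ_j(x_1, …, x_d) = (y_1, …, y_{d_j}) with {y_1, …, y_{d_j}} ⊆ {x_1, …, x_d}. For each i ∈ {1, …, d} and j ∈ {1, …, m}, let δ_{i,j} = dim(φ_j(⟨e_i⟩)), where ⟨e_i⟩ is the line spanned by the i-th standard basis vector e_i (so δ_{i,j} = 1 if φ_j retains coordinate x_i and δ_{i,j} = 0 otherwise). Let (s_1, …, s_m) ∈ [0,1]^m. Then the following are equivalent: (i) for every linear subspace H of ℝ^d, dim(H) ≤ Σ_{j=1}^m s_j · dim(φ_j(H)); (ii) for every i ∈ {1, …, d}, 1 ≤ Σ_{j=1}^m s_j · δ_{i,j}. -/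
/-- The orthogonal projection of `ℝ^d` onto the coordinates in `K`, as a linear map. -/
def coordProj (d : ℕ) (K : Finset (Fin d)) : (Fin d → ℝ) →ₗ[ℝ] ({ i // i ∈ K } → ℝ) :=
  LinearMap.funLeft ℝ ℝ (fun i => (i : Fin d))

/-!
Restricting the coordinate functionals of `ℝ^d` to `H` gives a family of vectors in the dual of
`H`, and since row rank equals column rank, `dim φ_j(H)` is the rank of the subfamily of
coordinates that `φ_j` keeps. Choose coordinates `B` that restrict to a basis of the dual of `H`.
The elements of `B` kept by `φ_j` are still linearly independent, so there are at most
`dim φ_j(H)` of them. As the weights of the projections that keep a given coordinate add up to at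
least `1`, double counting gives `dim H = |B| ≤ ∑_j s_j |B ∩ K_j| ≤ ∑_j s_j dim φ_j(H)`.
-/

open Module Submodule

section FractionalCover

variable {𝕜 V ι : Type*} [DivisionRing 𝕜] [AddCommGroup V] [Module 𝕜 V]

theorem finrank_image_finset_eq_card {v : ι → V} {B : Finset ι}
    (hB : LinearIndepOn 𝕜 v (B : Set ι)) : (v '' (B : Set ι)).finrank 𝕜 = B.card := by
  rw [Set.finrank, Set.image_eq_range, ← Fintype.card_coe]
  exact finrank_span_eq_card hB

section FiniteDimensional

variable [FiniteDimensional 𝕜 V]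

theorem exists_finset_linearIndepOn_card_eq_finrank_range (v : ι → V) :
    ∃ B : Finset ι, LinearIndepOn 𝕜 v (B : Set ι) ∧ B.card = (Set.range v).finrank 𝕜 := by
  obtain ⟨B, -, -, hspan, hB⟩ :=
    exists_linearIndepOn_extension (linearIndepOn_empty 𝕜 v) (Set.subset_univ _)
  lift B to Finset ι using hB.finite
  refine ⟨B, hB, ?_⟩
  have hspan_eq : span 𝕜 (v '' B) = span 𝕜 (Set.range v) := by
    rw [Set.image_univ] at hspan
    exact le_antisymm (span_mono (Set.image_subset_range v B)) (span_le.2 hspan)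
  rw [← finrank_image_finset_eq_card hB, Set.finrank, hspan_eq, Set.finrank]

theorem card_filter_mem_le_finrank_image {v : ι → V} {B : Finset ι}
    (hB : LinearIndepOn 𝕜 v (B : Set ι)) (S : Set ι) [DecidablePred (· ∈ S)] :
    (B.filter (· ∈ S)).card ≤ (v '' S).finrank 𝕜 := by
  have hBS : LinearIndepOn 𝕜 v (B.filter (· ∈ S) : Set ι) :=
    hB.mono (Finset.coe_subset.2 (Finset.filter_subset _ B))
  rw [← finrank_image_finset_eq_card hBS]
  exact Set.finrank_mono (Set.image_mono fun _ hi => (Finset.mem_filter.1 hi).2)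

theorem finrank_range_le_sum_mul_finrank_image {κ R : Type*} [Fintype κ] [Semiring R]
    [PartialOrder R] [IsOrderedRing R] (v : ι → V) {S : κ → Set ι}
    [∀ j, DecidablePred (· ∈ S j)] {s : κ → R} (hs : ∀ j, 0 ≤ s j)
    (hcover : ∀ i, 1 ≤ ∑ j with i ∈ S j, s j) :
    ((Set.range v).finrank 𝕜 : R) ≤ ∑ j, s j * ((v '' S j).finrank 𝕜 : R) := by
  obtain ⟨B, hB, hcard⟩ := exists_finset_linearIndepOn_card_eq_finrank_range (𝕜 := 𝕜) v
  calc ((Set.range v).finrank 𝕜 : R) = ∑ i ∈ B, 1 := by rw [← hcard, Finset.cast_card]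
    _ ≤ ∑ i ∈ B, ∑ j with i ∈ S j, s j := Finset.sum_le_sum fun i _ => hcover i
    _ = ∑ j, s j * ((B.filter (· ∈ S j)).card : R) := by
        simp only [Finset.sum_filter, Finset.cast_card, Finset.mul_sum, mul_ite, mul_one, mul_zero]
        exact Finset.sum_comm
    _ ≤ ∑ j, s j * ((v '' S j).finrank 𝕜 : R) := Finset.sum_le_sum fun j _ =>
        mul_le_mul_of_nonneg_left (Nat.mono_cast (card_filter_mem_le_finrank_image hB (S j))) (hs j)

end FiniteDimensional

end FractionalCover

section CoordinateMaps

variable {𝕜 ι α : Type*} [Field 𝕜]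

theorem span_range_proj_eq_top [Finite α] :
    span 𝕜 (Set.range fun a => (LinearMap.proj a : Dual 𝕜 (α → 𝕜))) = ⊤ := by
  classical
  have hproj : (fun a => (LinearMap.proj a : Dual 𝕜 (α → 𝕜))) = (Pi.basisFun 𝕜 α).dualBasis := by
    ext a b
    simp
  rw [hproj, Basis.span_eq]

theorem finrank_range_eq_finrank_range_proj_comp {W : Type*} [AddCommGroup W] [Module 𝕜 W]
    [Finite α] (p : W →ₗ[𝕜] α → 𝕜) :
    finrank 𝕜 p.range = (Set.range fun a => (LinearMap.proj a ∘ₗ p : Dual 𝕜 W)).finrank 𝕜 := by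
  have hrange : p.dualMap.range = span 𝕜 (Set.range fun a => LinearMap.proj a ∘ₗ p) := by
    rw [LinearMap.range_eq_map, ← span_range_proj_eq_top, map_span, ← Set.range_comp]
    rfl
  rw [← LinearMap.finrank_range_dualMap_eq_finrank_range, hrange, Set.finrank]

/-- The `i`-th coordinate functional of `ι → 𝕜`, restricted to the subspace `H`. The family
is taken in the dual of `H`, so that the ranks of its subfamilies are the dimensions of the
coordinate projections of `H`. -/
def coordOn (H : Submodule 𝕜 (ι → 𝕜)) (i : ι) : Dual 𝕜 H :=
  LinearMap.proj i ∘ₗ H.subtype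

theorem finrank_eq_finrank_range_coordOn [Finite ι] (H : Submodule 𝕜 (ι → 𝕜)) :
    finrank 𝕜 H = (Set.range (coordOn H)).finrank 𝕜 := by
  conv_lhs => rw [← H.range_subtype]
  exact finrank_range_eq_finrank_range_proj_comp H.subtype

theorem finrank_map_funLeft_eq_finrank_image_coordOn [Finite α] (H : Submodule 𝕜 (ι → 𝕜))
    (f : α → ι) :
    finrank 𝕜 (H.map (LinearMap.funLeft 𝕜 𝕜 f)) = (coordOn H '' Set.range f).finrank 𝕜 := by
  rw [← Set.range_comp, ← LinearMap.range_domRestrict]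
  exact finrank_range_eq_finrank_range_proj_comp ((LinearMap.funLeft 𝕜 𝕜 f).domRestrict H)

theorem finrank_map_funLeft_span_single [DecidableEq ι] (f : α → ι) (i : ι)
    [Decidable (i ∈ Set.range f)] :
    finrank 𝕜 ((span 𝕜 {Pi.single i (1 : 𝕜)}).map (LinearMap.funLeft 𝕜 𝕜 f)) =
      if i ∈ Set.range f then 1 else 0 := by
  rw [map_span, Set.image_singleton]
  split_ifs with hi
  · obtain ⟨a, rfl⟩ := hi
    exact finrank_span_singleton fun h => by simpa [LinearMap.funLeft_apply] using congrFun h a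
  · have hzero : LinearMap.funLeft 𝕜 𝕜 f (Pi.single i 1) = 0 :=
      funext fun a => Pi.single_eq_of_ne (fun h => hi ⟨a, h⟩) 1
    rw [hzero, span_zero_singleton, finrank_bot]

end CoordinateMaps

theorem stmt11_general {𝕜 ι κ R : Type*} {α : κ → Type*} [Field 𝕜] [Finite ι] [DecidableEq ι]
    [Fintype κ] [∀ j, Finite (α j)] [Semiring R] [PartialOrder R] [IsOrderedRing R]
    (f : ∀ j, α j → ι) {s : κ → R} (hs : ∀ j, 0 ≤ s j) :
    (∀ H : Submodule 𝕜 (ι → 𝕜),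
        (finrank 𝕜 H : R) ≤
          ∑ j, s j * (finrank 𝕜 (H.map (LinearMap.funLeft 𝕜 𝕜 (f j))) : R)) ↔
      ∀ i, 1 ≤ ∑ j, s j *
        (finrank 𝕜 ((span 𝕜 {Pi.single i (1 : 𝕜)}).map (LinearMap.funLeft 𝕜 𝕜 (f j))) : R) := by
  classical
  refine ⟨fun h i => ?_, fun h H => ?_⟩
  · have hline := h (span 𝕜 {Pi.single i 1})
    rwa [finrank_span_singleton (by simp), Nat.cast_one] at hline
  · have hcover (i : ι) : 1 ≤ ∑ j with i ∈ Set.range (f j), s j := by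
      simpa only [finrank_map_funLeft_span_single, Nat.cast_ite, Nat.cast_one, Nat.cast_zero,
        mul_ite, mul_one, mul_zero, ← Finset.sum_filter] using h i
    simp only [finrank_map_funLeft_eq_finrank_image_coordOn]
    rw [finrank_eq_finrank_range_coordOn]
    exact finrank_range_le_sum_mul_finrank_image (coordOn H) hs hcover

/-- For orthogonal coordinate projections `φ_j` (projecting onto the
coordinates in `K j`) and exponents `s_j ∈ [0,1]`, the condition
`dim H ≤ Σ_j s_j · dim (φ_j H)` for all linear subspaces `H ≤ ℝ^d` is equivalent to
the finitely many conditions `1 ≤ Σ_j s_j · δ_{i,j}` for `i = 1, …, d`, where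
`δ_{i,j} = dim (φ_j ⟨e_i⟩)` and `e_i` is the `i`-th standard basis vector. -/
theorem stmt11 (d : ℕ) (hd : 1 ≤ d) (m : ℕ) (K : Fin m → Finset (Fin d))
    (s : Fin m → ℝ) (hs : ∀ j, s j ∈ Set.Icc (0 : ℝ) 1) :
    (∀ H : Submodule ℝ (Fin d → ℝ),
        (Module.finrank ℝ H : ℝ) ≤
          ∑ j, s j * (Module.finrank ℝ (H.map (coordProj d (K j))) : ℝ))
    ↔ (∀ i : Fin d, (1 : ℝ) ≤ ∑ j, s j *
        (Module.finrank ℝ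
          ((Submodule.span ℝ {Pi.single i (1 : ℝ)}).map (coordProj d (K j))) : ℝ)) :=
  stmt11_general (fun j => ((↑) : {i // i ∈ K j} → Fin d)) fun j => (hs j).1
end

section
/- Let d ≥ 1 and for j = 1, …, m let φ_j : ℤ^d → ℤ^{d_j} be the projection onto a subset of d_j of the coordinates, and for i ∈ {1, …, d} let δ_{i,j} = 1 if φ_j retains coordinate i and δ_{i,j} = 0 otherwise. Let (s_1, …, s_m) ∈ [0,1]^m satisfy Σ_{j=1}^m s_j · δ_{i,j} ≥ 1 for every i ∈ {1, …, d}. Then every finite set E ⊆ ℤ^d satisfies |E| ≤ Π_{j=1}^m |φ_j(E)|^{s_j}. In particular, if in addition |φ_j(E)| ≤ S for every j with S ≥ 1, then |E| ≤ S^{Σ_{j=1}^m s_j}. -/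
/-- The projection of `ℤ^d` onto the coordinates in `K`. -/
def coordProjZ (d : ℕ) (K : Finset (Fin d)) (x : Fin d → ℤ) : { i // i ∈ K } → ℤ :=
  fun i => x (i : Fin d)

/-!
Slice `E` along one coordinate `f i`. A map `φ j` through which `f i` factors has an image that
splits as the disjoint union of the images of the slices, while for the other maps the image of a
slice is merely contained in the image of `E`. Summing the inequality for the slices, Hölder's
inequality with the exponents `s j` of the maps retaining `f i`, whose sum is at least one, gives
the inequality for `E`. Once every coordinate has been sliced away, `E` has at most one point.
-/

open Finset Function MeasureTheory
open scoped ENNReal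

theorem sum_rpow_le_rpow_sum {β : Type*} (T : Finset β) (f : β → ℝ≥0∞) {p : ℝ} (hp : 1 ≤ p) :
    ∑ t ∈ T, f t ^ p ≤ (∑ t ∈ T, f t) ^ p := by
  induction T using Finset.cons_induction with
  | empty => simp only [sum_empty, zero_le]
  | cons t T ht ih =>
    rw [sum_cons, sum_cons]
    exact (add_le_add_right ih _).trans (ENNReal.add_rpow_le_rpow_add _ _ hp)

section Holder

variable {β κ : Type*} (T : Finset β) (J : Finset κ) (a : κ → β → ℝ≥0∞) {s : κ → ℝ}

theorem sum_prod_rpow_le_prod_sum_rpow_of_sum_eq_one (hs : ∀ j ∈ J, 0 ≤ s j)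
    (hsum : ∑ j ∈ J, s j = 1) :
    ∑ t ∈ T, ∏ j ∈ J, a j t ^ s j ≤ ∏ j ∈ J, (∑ t ∈ T, a j t) ^ s j := by
  let _ : MeasurableSpace β := ⊤
  have holder := ENNReal.lintegral_prod_norm_pow_le (μ := Measure.count.restrict (T : Set β)) J
    (f := a) (fun _ _ => measurable_from_top.aemeasurable) hsum hs
  simpa only [lintegral_finset, Measure.count_singleton, mul_one] using holder

theorem sum_prod_rpow_le_prod_sum_rpow (hs : ∀ j ∈ J, 0 ≤ s j) (hsum : 1 ≤ ∑ j ∈ J, s j) :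
    ∑ t ∈ T, ∏ j ∈ J, a j t ^ s j ≤ ∏ j ∈ J, (∑ t ∈ T, a j t) ^ s j := by
  set σ := ∑ j ∈ J, s j with hσ
  have hσ_pos : 0 < σ := one_pos.trans_le hsum
  have prod_rpow_div (x : κ → ℝ≥0∞) : (∏ j ∈ J, x j ^ (s j / σ)) ^ σ = ∏ j ∈ J, x j ^ s j := by
    simp only [← ENNReal.prod_rpow_of_nonneg hσ_pos.le, ← ENNReal.rpow_mul,
      div_mul_cancel₀ _ hσ_pos.ne']
  calc ∑ t ∈ T, ∏ j ∈ J, a j t ^ s j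
      = ∑ t ∈ T, (∏ j ∈ J, a j t ^ (s j / σ)) ^ σ := by simp only [prod_rpow_div]
    _ ≤ (∑ t ∈ T, ∏ j ∈ J, a j t ^ (s j / σ)) ^ σ := sum_rpow_le_rpow_sum T _ hsum
    _ ≤ (∏ j ∈ J, (∑ t ∈ T, a j t) ^ (s j / σ)) ^ σ := by
      refine ENNReal.rpow_le_rpow ?_ hσ_pos.le
      refine sum_prod_rpow_le_prod_sum_rpow_of_sum_eq_one T J a
        (fun j hj => div_nonneg (hs j hj) hσ_pos.le) ?_
      rw [← sum_div, ← hσ, div_self hσ_pos.ne']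
    _ = ∏ j ∈ J, (∑ t ∈ T, a j t) ^ s j := prod_rpow_div _

end Holder

theorem card_image_eq_sum_card_image_fiber {X Y A : Type*} [DecidableEq Y] [DecidableEq A]
    {f : X → A} {φ : X → Y} (hf : f.FactorsThrough φ) (E : Finset X) :
    #(E.image φ) = ∑ t ∈ E.image f, #({x ∈ E | f x = t}.image φ) := by
  classical
  rw [← card_biUnion, ← biUnion_image,
    biUnion_filter_eq_of_maps_to fun _ => mem_image_of_mem f]
  intro t _ u _ htu
  simp only [disjoint_left, mem_image, mem_filter]
  rintro _ ⟨x, ⟨-, rfl⟩, rfl⟩ ⟨y, ⟨-, rfl⟩, hyx⟩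
  exact htu (hf hyx.symm)

section BrascampLieb

variable {X κ : Type*} {Y : κ → Type*} [Fintype κ] [∀ j, DecidableEq (Y j)]
  {φ : ∀ j, X → Y j} {s : κ → ℝ}

theorem card_le_prod_card_image_rpow_of_fibers {A : Type*} [DecidableEq A] {f : X → A}
    {J : Finset κ} (hJ : ∀ j ∈ J, f.FactorsThrough (φ j)) (hs : ∀ j, 0 ≤ s j)
    (hcover : 1 ≤ ∑ j ∈ J, s j) {E : Finset X}
    (hfiber : ∀ t ∈ E.image f,
      (#{x ∈ E | f x = t} : ℝ≥0∞) ≤ ∏ j, (#({x ∈ E | f x = t}.image (φ j)) : ℝ≥0∞) ^ s j) :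
    (#E : ℝ≥0∞) ≤ ∏ j, (#(E.image (φ j)) : ℝ≥0∞) ^ s j := by
  classical
  let fiber (t : A) : Finset X := {x ∈ E | f x = t}
  calc (#E : ℝ≥0∞)
      = ∑ t ∈ E.image f, (#(fiber t) : ℝ≥0∞) := by
        exact_mod_cast card_eq_sum_card_image f E
    _ ≤ ∑ t ∈ E.image f, ∏ j, (#((fiber t).image (φ j)) : ℝ≥0∞) ^ s j := sum_le_sum hfiber
    _ ≤ ∑ t ∈ E.image f, (∏ j ∈ J, (#((fiber t).image (φ j)) : ℝ≥0∞) ^ s j) *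
          ∏ j ∈ Jᶜ, (#(E.image (φ j)) : ℝ≥0∞) ^ s j := by
        simp only [← prod_mul_prod_compl J]
        gcongr with t _ j
        exacts [hs j, filter_subset _ _]
    _ = (∑ t ∈ E.image f, ∏ j ∈ J, (#((fiber t).image (φ j)) : ℝ≥0∞) ^ s j) *
          ∏ j ∈ Jᶜ, (#(E.image (φ j)) : ℝ≥0∞) ^ s j := (sum_mul ..).symm
    _ ≤ (∏ j ∈ J, (∑ t ∈ E.image f, (#((fiber t).image (φ j)) : ℝ≥0∞)) ^ s j) *
          ∏ j ∈ Jᶜ, (#(E.image (φ j)) : ℝ≥0∞) ^ s j := by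
        gcongr
        exact sum_prod_rpow_le_prod_sum_rpow _ J _ (fun j _ => hs j) hcover
    _ = (∏ j ∈ J, (#(E.image (φ j)) : ℝ≥0∞) ^ s j) *
          ∏ j ∈ Jᶜ, (#(E.image (φ j)) : ℝ≥0∞) ^ s j := by
        congr 1
        refine prod_congr rfl fun j hj => ?_
        rw [card_image_eq_sum_card_image_fiber (hJ j hj), Nat.cast_sum]
    _ = ∏ j, (#(E.image (φ j)) : ℝ≥0∞) ^ s j := prod_mul_prod_compl J _

theorem card_le_prod_card_image_rpow_of_subsingleton {E : Finset X}
    (hE : (E : Set X).Subsingleton) :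
    (#E : ℝ≥0∞) ≤ ∏ j, (#(E.image (φ j)) : ℝ≥0∞) ^ s j := by
  obtain rfl | ⟨x, hx⟩ := E.eq_empty_or_nonempty
  · simp only [card_empty, Nat.cast_zero, zero_le]
  · obtain rfl : E = {x} := coe_eq_singleton.1 (hE.eq_singleton_of_mem hx)
    simp only [card_singleton, image_singleton, Nat.cast_one, ENNReal.one_rpow, prod_const_one,
      le_refl]

theorem card_le_prod_card_image_rpow {ι : Type*} {A : ι → Type*} {f : ∀ i, X → A i}
    {J : ι → Finset κ} (hs : ∀ j, 0 ≤ s j) (T : Finset ι)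
    (hJ : ∀ i ∈ T, ∀ j ∈ J i, (f i).FactorsThrough (φ j))
    (hcover : ∀ i ∈ T, 1 ≤ ∑ j ∈ J i, s j) (E : Finset X)
    (hsep : ∀ x ∈ E, ∀ y ∈ E, (∀ i ∈ T, f i x = f i y) → x = y) :
    (#E : ℝ≥0∞) ≤ ∏ j, (#(E.image (φ j)) : ℝ≥0∞) ^ s j := by
  classical
  induction T using Finset.cons_induction generalizing E with
  | empty =>
    refine card_le_prod_card_image_rpow_of_subsingleton fun x hx y hy => hsep x hx y hy ?_
    simp only [notMem_empty, false_imp_iff, implies_true]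
  | cons i T hi ih =>
    simp only [forall_mem_cons] at hJ hcover hsep
    refine card_le_prod_card_image_rpow_of_fibers hJ.1 hs hcover.1 fun t _ => ?_
    refine ih hJ.2 hcover.2 _ fun x hx y hy hxy => ?_
    rw [mem_filter] at hx hy
    exact hsep x hx.1 y hy.1 ⟨hx.2.trans hy.2.symm, hxy⟩

end BrascampLieb

theorem prod_rpow_le_rpow_sum {κ : Type*} {J : Finset κ} {a s : κ → ℝ} {S : ℝ}
    (ha : ∀ j ∈ J, 0 ≤ a j) (hs : ∀ j ∈ J, 0 ≤ s j) (haS : ∀ j ∈ J, a j ≤ S) :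
    ∏ j ∈ J, a j ^ s j ≤ S ^ ∑ j ∈ J, s j := by
  obtain rfl | ⟨k, hk⟩ := J.eq_empty_or_nonempty
  · simp only [prod_empty, sum_empty, Real.rpow_zero, le_refl]
  · rw [Real.rpow_sum_of_nonneg ((ha k hk).trans (haS k hk)) hs]
    exact prod_le_prod (fun j hj => Real.rpow_nonneg (ha j hj) _) fun j hj =>
      Real.rpow_le_rpow (ha j hj) (haS j hj) (hs j hj)

theorem stmt12_general {X ι κ : Type*} {A : ι → Type*} {Y : κ → Type*} [Fintype κ]
    [∀ j, DecidableEq (Y j)] {φ : ∀ j, X → Y j} {f : ∀ i, X → A i} {J : ι → Finset κ}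
    {s : κ → ℝ} (hs : ∀ j, 0 ≤ s j) (T : Finset ι)
    (hJ : ∀ i ∈ T, ∀ j ∈ J i, (f i).FactorsThrough (φ j))
    (hcover : ∀ i ∈ T, 1 ≤ ∑ j ∈ J i, s j) (E : Finset X)
    (hsep : ∀ x ∈ E, ∀ y ∈ E, (∀ i ∈ T, f i x = f i y) → x = y) :
    (#E : ℝ) ≤ ∏ j, (#(E.image (φ j)) : ℝ) ^ s j ∧
    ∀ S : ℝ, (∀ j, (#(E.image (φ j)) : ℝ) ≤ S) → (#E : ℝ) ≤ S ^ ∑ j, s j := by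
  have card_le : (#E : ℝ) ≤ ∏ j, (#(E.image (φ j)) : ℝ) ^ s j := by
    have prod_ne_top : ∏ j, (#(E.image (φ j)) : ℝ≥0∞) ^ s j ≠ ∞ :=
      ENNReal.prod_ne_top fun j _ => ENNReal.rpow_ne_top_of_nonneg (hs j) (ENNReal.natCast_ne_top _)
    simpa only [ENNReal.toReal_natCast, ENNReal.toReal_prod, ← ENNReal.toReal_rpow] using
      ENNReal.toReal_mono prod_ne_top (card_le_prod_card_image_rpow hs T hJ hcover E hsep)
  exact ⟨card_le, fun S hS => card_le.trans <|
    prod_rpow_le_rpow_sum (fun _ _ => Nat.cast_nonneg _) (fun j _ => hs j) fun j _ => hS j⟩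

/-- discrete Brascamp–Lieb inequality for coordinate projections.
Let `φ_j : ℤ^d → ℤ^{d_j}` project onto the coordinates in `K j`, let `δ_{i,j}` be `1`
if `φ_j` retains coordinate `i` and `0` otherwise, and let `s_j ∈ [0,1]` satisfy
`Σ_j s_j·δ_{i,j} ≥ 1` for every `i`. Then every finite `E ⊆ ℤ^d` satisfies
`|E| ≤ Π_j |φ_j(E)|^{s_j}`; in particular, if moreover `|φ_j(E)| ≤ S` for all `j` with
`S ≥ 1`, then `|E| ≤ S^{Σ_j s_j}`. -/
theorem stmt12 (d : ℕ) (hd : 1 ≤ d) (m : ℕ) (K : Fin m → Finset (Fin d))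
    (s : Fin m → ℝ) (hs : ∀ j, s j ∈ Set.Icc (0 : ℝ) 1)
    (hδ : ∀ i : Fin d, (1 : ℝ) ≤ ∑ j, s j * (if i ∈ K j then (1 : ℝ) else 0))
    (E : Finset (Fin d → ℤ)) :
    (E.card : ℝ) ≤ ∏ j, ((E.image (coordProjZ d (K j))).card : ℝ) ^ (s j) ∧
    ∀ S : ℝ, 1 ≤ S → (∀ j, ((E.image (coordProjZ d (K j))).card : ℝ) ≤ S) →
      (E.card : ℝ) ≤ S ^ (∑ j, s j) := by
  have factors (i : Fin d) (j : Fin m) (hij : i ∈ K j) :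
      (fun x : Fin d → ℤ => x i).FactorsThrough (coordProjZ d (K j)) :=
    fun _ _ h => congrFun h ⟨i, hij⟩
  have cover (i : Fin d) : 1 ≤ ∑ j with i ∈ K j, s j := by
    simpa only [mul_ite, mul_one, mul_zero, sum_filter] using hδ i
  have bound := stmt12_general (fun j => (hs j).1) univ
    (fun i _ j hj => factors i j (mem_filter.1 hj).2) (fun i _ => cover i) E
    fun _ _ _ _ h => funext fun i => h i (mem_univ i)
  exact ⟨bound.1, fun S _ => bound.2 S⟩
end
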